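/- The expected number of (FVar)-redexes in a uniformly random λυ-term of size n satisfies E(X_n)/n → 3/256, where an (FVar)-redex is a subterm of the form 0[a/] (the index 0 under a closure whose substitution is a slash). -/

import Mathlib

open Finset Filter

mutual
inductive Tm : Type
  | idx : Nat → Tm
  | lam : Tm → Tm
  | app : Tm → Tm → Tm
  | clos : Tm → Subst → Tm
inductive Subst : Type
  | slash : Tm → Subst
  | lift : Subst → Subst
  | shift : Subst
end

mutual
/-- Natural size of a λυ-term: every constructor weighs 1; index n has size n+1. -/
def Tm.size : Tm → Nat
  | .idx n => n + 1
  | .lam a => Tm.size a + 1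
  | .app a b => Tm.size a + Tm.size b + 1
  | .clos a s => Tm.size a + Subst.size s + 1
/-- Natural size of an explicit substitution. -/
def Subst.size : Subst → Nat
  | .slash a => Tm.size a + 1
  | .lift s => Subst.size s + 1
  | .shift => 1
end

/-- Number of λυ-terms of size `n`. -/
noncomputable def tcount (n : ℕ) : ℕ := Nat.card {a : Tm // Tm.size a = n}

/-- Number of explicit substitutions of size `n`. -/
noncomputable def scount (n : ℕ) : ℕ := Nat.card {s : Subst // Subst.size s = n}

/-- Expected value of the statistic `f` on a uniformly random λυ-term of size `n`
(the statistic is assumed to be bounded by the size, so summing `k` up to `n` suffices). -/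
noncomputable def expectTm (f : Tm → ℕ) (n : ℕ) : ℝ :=
  (∑ k ∈ Finset.range (n + 1),
      (k : ℝ) * (Nat.card {a : Tm // Tm.size a = n ∧ f a = k} : ℝ)) / (tcount n : ℝ)

mutual
/-- Number of (fvar)-redexes occurring in a λυ-term. -/
def Tm.fvarCount : Tm → ℕ
  | .idx _ => 0
  | .lam a => Tm.fvarCount a
  | .app a b => Tm.fvarCount a + Tm.fvarCount b
  | .clos (.idx 0) (.slash b) => Tm.fvarCount b + 1
  | .clos a s => Tm.fvarCount a + Subst.fvarCount s
/-- Number of (fvar)-redexes occurring in a substitution. -/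
def Subst.fvarCount : Subst → ℕ
  | .slash a => Tm.fvarCount a
  | .lift s => Subst.fvarCount s
  | .shift => 0
end

section Aux
open Finset Filter PowerSeries

theorem Tm.size_pos : ∀ a : Tm, 0 < a.size
  | .idx n => by simp [Tm.size]
  | .lam a => by simp [Tm.size]
  | .app a b => by simp [Tm.size]
  | .clos a s => by simp [Tm.size]

theorem Subst.size_pos : ∀ a : Subst, 0 < a.size
  | .slash n => by simp [Subst.size]
  | .lift a => by simp [Subst.size]
  | .shift => by simp [Subst.size]

theorem fin_lt (n : ℕ) : {a : Tm | a.size < n}.Finite ∧ {s : Subst | s.size < n}.Finite := by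
  induction n with
  | zero => simp
  | succ n ih =>
    obtain ⟨h1, h2⟩ := ih
    constructor
    · apply Set.Finite.subset (((((Set.finite_Iio n).image Tm.idx).union (h1.image Tm.lam)).union
        (h1.image2 Tm.app h1)).union (h1.image2 Tm.clos h2))
      intro a ha
      cases a with
      | idx k => left; left; left; exact ⟨k, by simpa [Tm.size] using ha, rfl⟩
      | lam a => left; left; right; exact ⟨a, by simpa [Tm.size] using ha, rfl⟩
      | app a b =>
        left; right
        simp only [Tm.size, Set.mem_ofPred_eq] at ha
        exact ⟨a, by simp; omega, b, by simp; omega, rfl⟩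
      | clos a b =>
        right
        simp only [Tm.size, Set.mem_ofPred_eq] at ha
        exact ⟨a, by simp; omega, b, by simp; omega, rfl⟩
    · apply Set.Finite.subset (((h1.image Subst.slash).union (h2.image Subst.lift)).union
        (Set.finite_singleton Subst.shift))
      intro a ha
      cases a with
      | slash k => left; left; exact ⟨k, by simpa [Subst.size] using ha, rfl⟩
      | lift a => left; right; exact ⟨a, by simpa [Subst.size] using ha, rfl⟩
      | shift => right; rfl

theorem finT (n : ℕ) : {a : Tm | a.size = n}.Finite :=
  (fin_lt (n+1)).1.subset (fun a (ha : a.size = n) => by simp [ha])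
theorem finS (n : ℕ) : {a : Subst | a.size = n}.Finite :=
  (fin_lt (n+1)).2.subset (fun a (ha : a.size = n) => by simp [ha])

noncomputable def Tms (n : ℕ) : Finset Tm := (finT n).toFinset
noncomputable def Sbs (n : ℕ) : Finset Subst := (finS n).toFinset

@[simp] theorem mem_Tms {n a} : a ∈ Tms n ↔ a.size = n := by simp [Tms]
@[simp] theorem mem_Sbs {n a} : a ∈ Sbs n ↔ a.size = n := by simp [Sbs]

noncomputable def gT (w : Tm → ℝ) : ℝ⟦X⟧ := PowerSeries.mk fun n => ∑ a ∈ Tms n, w a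
noncomputable def gS (w : Subst → ℝ) : ℝ⟦X⟧ := PowerSeries.mk fun n => ∑ a ∈ Sbs n, w a

theorem Tms_zero : Tms 0 = ∅ := by
  ext a; have := a.size_pos; simp; omega
theorem Sbs_zero : Sbs 0 = ∅ := by
  ext a; have := a.size_pos; simp; omega

open Classical in
theorem sumT (w : Tm → ℝ) (n : ℕ) : ∑ a ∈ Tms (n+1), w a =
    w (.idx n) + ∑ a ∈ Tms n, w (.lam a)
    + ∑ p ∈ antidiagonal n, ∑ a ∈ Tms p.1, ∑ b ∈ Tms p.2, w (.app a b)
    + ∑ p ∈ antidiagonal n, ∑ a ∈ Tms p.1, ∑ b ∈ Sbs p.2, w (.clos a b) := by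
  have e : Tms (n+1) = (({Tm.idx n} ∪ (Tms n).image Tm.lam) ∪
      ((antidiagonal n).sigma (fun p => Tms p.1 ×ˢ Tms p.2)).image (fun q => Tm.app q.2.1 q.2.2)) ∪
      ((antidiagonal n).sigma (fun p => Tms p.1 ×ˢ Sbs p.2)).image
        (fun q => Tm.clos q.2.1 q.2.2) := by
    ext a
    cases a with
    | idx k => simp [Tm.size]
    | lam a => simp [Tm.size]
    | app a b => simp [Tm.size]
    | clos a b => simp [Tm.size]
  rw [e, sum_union, sum_union, sum_union, sum_singleton, sum_image, sum_image, sum_image,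
    sum_sigma, sum_sigma]
  · simp only [sum_product]
  · rintro ⟨⟨i, j⟩, a, b⟩ h ⟨⟨i', j'⟩, a', b'⟩ h' hh
    simp at h h' hh
    obtain ⟨rfl, rfl⟩ := hh
    obtain ⟨-, rfl, rfl⟩ := h
    obtain ⟨-, rfl, rfl⟩ := h'
    rfl
  · rintro ⟨⟨i, j⟩, a, b⟩ h ⟨⟨i', j'⟩, a', b'⟩ h' hh
    simp at h h' hh
    obtain ⟨rfl, rfl⟩ := hh
    obtain ⟨-, rfl, rfl⟩ := h
    obtain ⟨-, rfl, rfl⟩ := h'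
    rfl
  · intro a _ b _ h; simpa using h
  · rw [Finset.disjoint_left]; intro a h1 h2; simp at h1 h2; grind
  · rw [Finset.disjoint_left]; intro a h1 h2; simp at h1 h2; grind
  · rw [Finset.disjoint_left]; intro a h1 h2; simp at h1 h2; grind

open Classical in
theorem sumS (w : Subst → ℝ) (n : ℕ) : ∑ a ∈ Sbs (n+1), w a =
    ∑ a ∈ Tms n, w (.slash a) + ∑ a ∈ Sbs n, w (.lift a) + if n = 0 then w .shift else 0 := by
  have e : Sbs (n+1) = ((Tms n).image Subst.slash ∪ (Sbs n).image Subst.lift) ∪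
      (if n = 0 then {Subst.shift} else ∅) := by
    ext a
    cases a with
    | slash k => simp [Subst.size]; split_ifs <;> simp
    | lift a => simp [Subst.size]; split_ifs <;> simp
    | shift => simp [Subst.size]; split_ifs <;> simp <;> omega
  rw [e, sum_union, sum_union, sum_image, sum_image]
  · split_ifs <;> simp
  · intro a _ b _ h; simpa using h
  · intro a _ b _ h; simpa using h
  · rw [Finset.disjoint_left]; intro a h1 h2; simp at h1 h2; grind
  · rw [Finset.disjoint_left]; intro a h1 h2; split_ifs at h2 <;> simp at h1 h2; grind

theorem coeff_gT_mul (v w : Tm → ℝ) (n : ℕ) : coeff n (gT v * gT w) =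
    ∑ p ∈ antidiagonal n, ∑ a ∈ Tms p.1, ∑ b ∈ Tms p.2, v a * w b := by
  simp [coeff_mul, gT, sum_mul_sum]
theorem coeff_gTS_mul (v : Tm → ℝ) (w : Subst → ℝ) (n : ℕ) : coeff n (gT v * gS w) =
    ∑ p ∈ antidiagonal n, ∑ a ∈ Tms p.1, ∑ b ∈ Sbs p.2, v a * w b := by
  simp [coeff_mul, gT, gS, sum_mul_sum]

noncomputable def GT : ℝ⟦X⟧ := gT fun _ => 1
noncomputable def GS : ℝ⟦X⟧ := gS fun _ => 1
noncomputable def GF : ℝ⟦X⟧ := gT fun a => (a.fvarCount : ℝ)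
noncomputable def GG : ℝ⟦X⟧ := gS fun a => (a.fvarCount : ℝ)
noncomputable def r0 : Tm → ℝ
  | .idx 0 => 1
  | _ => 0
noncomputable def r1 : Subst → ℝ
  | .slash _ => 1
  | _ => 0

theorem fvar_clos (a : Tm) (s : Subst) :
    ((Tm.clos a s).fvarCount : ℝ) = a.fvarCount * 1 + 1 * s.fvarCount + r0 a * r1 s := by
  rcases a with (_|k) | _ | _ | _ <;> rcases s with _ | _ | _ <;>
    simp [Tm.fvarCount, Subst.fvarCount, r0, r1]

theorem eqT : GT = X * PowerSeries.mk (fun _ => (1:ℝ)) + X * GT + X * (GT * GT) + X * (GT * GS) := by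
  ext n
  cases n with
  | zero => simp [GT, gT, Tms_zero]
  | succ n =>
    simp only [map_add, coeff_succ_X_mul]
    rw [GT, GS, coeff_gT_mul, coeff_gTS_mul]
    simp only [gT, coeff_mk]
    rw [sumT]; simp

theorem eqS : GS = X * GT + X * GS + X := by
  ext n
  cases n with
  | zero => simp [GS, gS, Sbs_zero]
  | succ n =>
    simp only [map_add, coeff_succ_X_mul]
    simp only [GT, GS, gT, gS, coeff_mk]
    rw [sumS]; simp [coeff_X]

theorem eqG : GG = X * GF + X * GG := by
  ext n
  cases n with
  | zero => simp [GG, gS, Sbs_zero]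
  | succ n =>
    simp only [map_add, coeff_succ_X_mul]
    simp only [GF, GG, gT, gS, coeff_mk]
    rw [sumS]; simp [Subst.fvarCount]

theorem eqr0 : gT r0 = X := by
  ext n
  cases n with
  | zero => simp [gT, Tms_zero]
  | succ n =>
    simp only [gT, coeff_mk]
    rw [sumT]; cases n <;> simp [r0, coeff_X]

theorem eqr1 : gS r1 = X * GT := by
  ext n
  cases n with
  | zero => simp [gS, Sbs_zero]
  | succ n =>
    simp only [coeff_succ_X_mul]
    simp only [GT, gT, gS, coeff_mk]
    rw [sumS]; simp [r1]

theorem eqF : GF = X * GF + X * (GF * GT + GT * GF) + X * (GF * GS + GT * GG + X * (X * GT)) := by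
  rw [← eqr1]
  nth_rw 4 [← eqr0]
  ext n
  cases n with
  | zero => simp [GF, gT, Tms_zero]
  | succ n =>
    simp only [map_add, coeff_succ_X_mul]
    rw [GT, GS, GF, GG, coeff_gT_mul, coeff_gT_mul, coeff_gTS_mul, coeff_gTS_mul, coeff_gTS_mul]
    simp only [gT, coeff_mk]
    rw [sumT]
    simp only [fvar_clos, sum_add_distrib]
    simp [Tm.fvarCount, sum_add_distrib]

theorem one_sub_X_ne : (1 - X : ℝ⟦X⟧) ≠ 0 := by
  intro h
  have := congrArg (coeff 0) h
  simp at this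

theorem geo : (1 - X : ℝ⟦X⟧) * PowerSeries.mk (fun _ => (1:ℝ)) = 1 := by
  have := PowerSeries.mk_one_mul_one_sub_eq_one ℝ
  rw [mul_comm]; exact this

theorem quadT : X * GT ^ 2 = GT - 2 * X * GT - (X : ℝ⟦X⟧) := by
  have h1 := eqT
  have h2 := eqS
  have h3 := geo
  generalize PowerSeries.mk (fun _ => (1:ℝ)) = M at *
  have h4 : (1 - X) * GS = X * GT + X := by linear_combination h2
  have h5 : (1 - X) * GT = X + X * GT + X * GT ^ 2 := by
    linear_combination (1 - X) * h1 + X * h3 + X * GT * h4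
  linear_combination (-1 : ℝ⟦X⟧) * h5

noncomputable def Y : ℝ⟦X⟧ := X + X * GT
noncomputable def B : ℝ⟦X⟧ := d⁄dX ℝ Y

theorem Y_eq : Y = X + Y ^ 2 := by
  rw [Y]; linear_combination (-X : ℝ⟦X⟧) * quadT

theorem F_eq : GF * (1 - 2 * Y) = (1 - X) * X ^ 3 * GT := by
  have h1 := eqF
  have h2 := eqS
  have h3 := eqG
  have h4 := quadT
  have h5 : (1 - X) * GS = X * GT + X := by linear_combination h2
  have h6 : (1 - X) * GG = X * GF := by linear_combination h3
  rw [Y]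
  linear_combination (1 - X) * h1 + X * GF * h5 + X * GT * h6

theorem B_mul : B * (1 - 2 * Y) = 1 := by
  have := congrArg (d⁄dX ℝ) Y_eq
  simp [Derivation.leibniz_pow] at this
  rw [B]
  linear_combination this

theorem B_ode : d⁄dX ℝ B * (1 - 4 * X) = 2 * B := by
  have h := congrArg (d⁄dX ℝ) B_mul
  have h2 := B_mul
  have h3 := Y_eq
  have h4 : d⁄dX ℝ (2 : ℝ⟦X⟧) = 0 := by simpa using (d⁄dX ℝ).map_natCast 2
  simp [Derivation.leibniz, h4] at h
  rw [← B] at h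
  linear_combination (1 - 2 * Y) * h + 2 * B * h2 + 4 * (d⁄dX ℝ B) * h3

theorem F_B : 2 * GF = (1 - X) * X ^ 2 * (B - 1 - 2 * X * B) := by
  have h := F_eq
  have h2 := B_mul
  rw [Y] at *
  linear_combination 2 * B * h - (2 * GF + (1 - X) * X ^ 2) * h2

noncomputable def b (n : ℕ) : ℝ := coeff n B

theorem b_zero : b 0 = 1 := by
  simp [b, B, Y, coeff_derivative, coeff_X, GT, gT, Tms_zero, coeff_succ_X_mul]

theorem b_succ (n : ℕ) : ((n : ℝ) + 1) * b (n+1) = (4 * n + 2) * b n := by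
  have h := congrArg (coeff n) B_ode
  have e : d⁄dX ℝ B * (1 - 4 * X) = d⁄dX ℝ B - C (4:ℝ) * (X * d⁄dX ℝ B) := by
    rw [show (C (4:ℝ) : ℝ⟦X⟧) = 4 from map_ofNat _ 4]; ring
  rw [e, show (2 : ℝ⟦X⟧) = C (2:ℝ) from (map_ofNat _ 2).symm] at h
  cases n with
  | zero =>
    simp only [map_sub, coeff_C_mul, coeff_zero_X_mul, coeff_derivative] at h
    simp only [b]; push_cast at *; linarith
  | succ n =>
    simp only [map_sub, coeff_C_mul, coeff_succ_X_mul, coeff_derivative] at h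
    simp only [b]; push_cast at *; linarith

theorem b_pos (n : ℕ) : 0 < b n := by
  induction n with
  | zero => simp [b_zero]
  | succ n ih =>
    have := b_succ n
    have h : 0 < ((n : ℝ) + 1) * b (n+1) := by rw [this]; positivity
    exact pos_of_mul_pos_right h (by positivity)

theorem T_b (n : ℕ) : b (n+1) = (n + 2) * coeff (n+1) GT := by
  simp [b, B, Y, coeff_derivative, coeff_succ_X_mul, coeff_X]; ring

theorem F_b (n : ℕ) : 2 * coeff (n+4) GF = b (n+2) - 3 * b (n+1) + 2 * b n := by
  have h := congrArg (coeff (n+4)) F_B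
  have e : (1 - X) * X ^ 2 * (B - 1 - 2 * X * B) =
     X * (X * B) - C (3:ℝ) * (X * (X * (X * B))) + C (2:ℝ) * (X * (X * (X * (X * B)))) - X^2 + X^3 := by
    rw [show (C (3:ℝ) : ℝ⟦X⟧) = 3 from map_ofNat _ 3,
      show (C (2:ℝ) : ℝ⟦X⟧) = 2 from map_ofNat _ 2]; ring
  rw [e, show (2 : ℝ⟦X⟧) = C (2:ℝ) from (map_ofNat _ 2).symm] at h
  simp only [map_sub, map_add, coeff_C_mul, coeff_succ_X_mul, coeff_X_pow] at h
  simp only [b]; simpa using h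

theorem fvar_le (n : ℕ) : (∀ a : Tm, a.size < n → a.fvarCount ≤ a.size) ∧
    (∀ a : Subst, a.size < n → a.fvarCount ≤ a.size) := by
  induction n with
  | zero => simp
  | succ n ih =>
    obtain ⟨h1, h2⟩ := ih
    constructor
    · intro a ha
      rcases a with k | a | ⟨a, c⟩ | ⟨a, s⟩
      · simp [Tm.fvarCount]
      · have := h1 a
        simp only [Tm.size, Tm.fvarCount] at *; omega
      · have := h1 a
        have := h1 c
        simp only [Tm.size, Tm.fvarCount] at *; omega
      · have := h1 a
        have := h2 s
        have : (Tm.clos a s).fvarCount ≤ a.fvarCount + s.fvarCount + 1 := by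
          rcases a with (_|k) | _ | _ | _ <;> rcases s with _ | _ | _ <;>
            simp [Tm.fvarCount, Subst.fvarCount]
        simp only [Tm.size] at *; omega
    · intro a ha
      rcases a with a | a | _
      · have := h1 a
        simp only [Subst.size, Subst.fvarCount] at *; omega
      · have := h2 a
        simp only [Subst.size, Subst.fvarCount] at *; omega
      · simp [Subst.fvarCount]

theorem tcount_eq (n : ℕ) : (tcount n : ℝ) = coeff n GT := by
  have : tcount n = (Tms n).card := by
    rw [tcount, ← Nat.card_eq_finsetCard]
    exact Nat.card_congr (Equiv.subtypeEquivRight (by simp))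
  simp [GT, gT, this]

theorem num_eq (n : ℕ) : (∑ k ∈ Finset.range (n + 1),
      (k : ℝ) * (Nat.card {a : Tm // Tm.size a = n ∧ a.fvarCount = k} : ℝ)) = coeff n GF := by
  simp only [GF, gT, coeff_mk]
  rw [← sum_fiberwise_of_maps_to (s := Tms n) (t := range (n+1)) (g := Tm.fvarCount)]
  · apply sum_congr rfl
    intro k _
    rw [sum_congr rfl (g := fun _ => (k:ℝ)) (by intro a ha; simp at ha; simp [ha.2])]
    have : Nat.card {a : Tm // Tm.size a = n ∧ a.fvarCount = k} =
        ((Tms n).filter (fun a => a.fvarCount = k)).card := by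
      rw [← Nat.card_eq_finsetCard]
      apply Nat.card_congr
      exact Equiv.subtypeEquivRight (by simp)
    rw [this]; simp [mul_comm]
  · intro a ha
    simp at ha
    have := (fvar_le (n+1)).1 a (by omega)
    simp; omega

noncomputable def rr (n : ℕ) : ℝ := b (n+1) / b n

theorem rr_tendsto : Tendsto rr atTop (nhds 4) := by
  have h : ∀ n, rr n = 4 - 2 * (1 / ((n:ℝ) + 1)) := by
    intro n
    have h1 := b_succ n
    have h2 := (b_pos n).ne'
    rw [rr]
    field_simp
    linarith
  have h2 := (tendsto_one_div_add_atTop_nhds_zero_nat (𝕜 := ℝ)).const_mul 2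
  have h3 := h2.const_sub 4
  rw [funext h]
  simpa using h3

theorem final_eq (n : ℕ) : expectTm Tm.fvarCount (n+4) / ((n+4 : ℕ) : ℝ) =
    (rr n * rr (n+1) - 3 * rr n + 2) / 2 * (1 + 1 / (((n+3 : ℕ) : ℝ) + 1)) /
      (rr n * rr (n+1) * rr (n+2) * rr (n+3)) := by
  rw [expectTm, num_eq, tcount_eq]
  have hT := T_b (n+3)
  have hF := F_b n
  have h0 := (b_pos n).ne'
  have h1 := (b_pos (n+1)).ne'
  have h2 := (b_pos (n+2)).ne'
  have h3 := (b_pos (n+3)).ne'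
  have h4 := (b_pos (n+4)).ne'
  have eF : coeff (n+4) GF = (b (n+2) - 3 * b (n+1) + 2 * b n) / 2 := by linarith
  have eT : coeff (n+4) GT = b (n+4) / (n + 5) := by
    rw [eq_div_iff (by positivity)]
    push_cast at hT
    linarith
  rw [eF, eT]
  simp only [rr]
  push_cast
  have h5 : (n:ℝ) + 3 + 1 ≠ 0 := by positivity
  have h6 : (n:ℝ) + 4 ≠ 0 := by positivity
  have h7 : (n:ℝ) + 5 ≠ 0 := by positivity
  field_simp
  ring

theorem final_tendsto :
    Tendsto (fun n : ℕ => expectTm Tm.fvarCount n / (n : ℝ)) atTop (nhds (3 / 256)) := by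
  rw [← tendsto_add_atTop_iff_nat 4]
  rw [funext final_eq]
  have r := rr_tendsto
  have r1 := (tendsto_add_atTop_iff_nat 1).2 r
  have r2 := (tendsto_add_atTop_iff_nat 2).2 r
  have r3 := (tendsto_add_atTop_iff_nat 3).2 r
  have q := (tendsto_add_atTop_iff_nat 3).2 (tendsto_one_div_add_atTop_nhds_zero_nat (𝕜 := ℝ))
  have := (((((r.mul r1).sub (r.const_mul 3)).add_const 2).div_const 2).mul (q.const_add 1)).div
    (((r.mul r1).mul r2).mul r3) (by norm_num)
  have e : (3 / 256 : ℝ) = (4 * 4 - 3 * 4 + 2) / 2 * (1 + 0) / (4 * 4 * 4 * 4) := by norm_num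
  rw [e]
  exact this

end Aux

/-- the expected number of (FVar)-redexes (subterms 0[a/]) per size n
tends to 3/256. -/
theorem stmt16 :
    Tendsto (fun n : ℕ => expectTm Tm.fvarCount n / (n : ℝ)) atTop (nhds (3 / 256)) := final_tendsto
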